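/- Let T ≥ 2 be an integer, ξ_1,…,ξ_T > 0 real numbers, and ρ ∈ [0,1). Then d_t > ρ for every t = 2,…,T, and δ_t > ρ for every t = 1,…,T−1; equivalently, ρ/d_t < 1 and ρ/δ_t < 1 for those indices. -/

import Mathlib

/-!
The map `y ↦ 1 + ρ ^ 2 - ρ ^ 2 / y` is monotone on `(0, ∞)` and fixes `1`, so it sends `(1, ∞)`
into `[1, ∞)` for every `ρ`, and adding `ξ t > 0` returns the value to `(1, ∞)`. Both recursions
iterate this perturbed map from a starting value `1 + ξ > 1`, `d` downwards from `T` and `δ` upwards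
from `1`, hence stay above `1 > ρ`.
-/

section OrderedField

variable {K : Type*} [Field K] [LinearOrder K] [IsStrictOrderedRing K]

theorem div_lt_one_of_lt_one_of_one_lt {x y : K} (hx : x < 1) (hy : 1 < y) : x / y < 1 :=
  (div_lt_one (one_pos.trans hy)).2 (hx.trans hy)

theorem one_lt_one_add_add_sub_div {a b y : K} (ha : 0 ≤ a) (hb : 0 < b) (hy : 1 ≤ y) :
    1 < 1 + a + b - a / y := by
  have : a / y ≤ a := div_le_self ha hy
  linarith

theorem one_lt_of_forward_recursion {a : K} {ξ u : ℕ → K} {m n : ℕ} (ha : 0 ≤ a)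
    (hξ : ∀ t, m < t → t ≤ n → 0 < ξ t) (hm : 1 < u m)
    (hu : ∀ t, m ≤ t → t < n → u (t + 1) = 1 + a + ξ (t + 1) - a / u t) :
    ∀ t, m ≤ t → t ≤ n → 1 < u t := by
  intro t hmt
  induction t, hmt using Nat.le_induction with
  | base => exact fun _ ↦ hm
  | succ t hmt ih =>
    intro htn
    rw [hu t hmt htn]
    exact one_lt_one_add_add_sub_div ha (hξ _ (Nat.lt_succ_of_le hmt) htn)
      (ih (Nat.le_of_succ_le htn)).le

theorem one_lt_of_backward_recursion {a : K} {ξ u : ℕ → K} {m n : ℕ} (ha : 0 ≤ a)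
    (hξ : ∀ t, m ≤ t → t < n → 0 < ξ t) (hn : 1 < u n)
    (hu : ∀ t, m ≤ t → t < n → u t = 1 + a + ξ t - a / u (t + 1)) :
    ∀ t, m ≤ t → t ≤ n → 1 < u t := by
  intro t hmt htn
  induction htn using Nat.decreasingInduction with
  | self => exact hn
  | of_succ t htn ih =>
    rw [hu t hmt htn]
    exact one_lt_one_add_add_sub_div ha (hξ t hmt htn) (ih (Nat.le_succ_of_le hmt)).le

theorem stmt3_general {T : ℕ} {ρ : K} {ξ d δ : ℕ → K}
    (hξ : ∀ t, 1 ≤ t → t ≤ T → 0 < ξ t)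
    (hdT : d T = 1 + ξ T)
    (hd : ∀ t, 2 ≤ t → t ≤ T - 1 → d t = 1 + ρ ^ 2 + ξ t - ρ ^ 2 / d (t + 1))
    (hδ1 : δ 1 = 1 + ξ 1)
    (hδ : ∀ t, 2 ≤ t → t ≤ T - 1 → δ t = 1 + ρ ^ 2 + ξ t - ρ ^ 2 / δ (t - 1)) :
    (∀ t, 2 ≤ t → t ≤ T → 1 < d t) ∧ (∀ t, 1 ≤ t → t ≤ T - 1 → 1 < δ t) := by
  constructor
  · intro t ht htT
    have one_lt_d_T : 1 < d T := hdT ▸ lt_add_of_pos_right 1 (hξ T (by lia) le_rfl)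
    exact one_lt_of_backward_recursion (sq_nonneg ρ) (fun s hs hsT ↦ hξ s (by lia) hsT.le)
      one_lt_d_T (fun s hs hsT ↦ hd s hs (by lia)) t ht htT
  · intro t ht htT
    have one_lt_δ_one : 1 < δ 1 := hδ1 ▸ lt_add_of_pos_right 1 (hξ 1 le_rfl (by lia))
    exact one_lt_of_forward_recursion (sq_nonneg ρ) (fun s hs hsT ↦ hξ s hs.le (by lia))
      one_lt_δ_one (fun s hs hsT ↦ hδ (s + 1) (by lia) hsT) t ht htT

end OrderedField

/-- for `ρ ∈ [0,1)`, `d_t > ρ` for `t = 2,…,T` and `δ_t > ρ` for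
`t = 1,…,T−1`; equivalently `ρ/d_t < 1` and `ρ/δ_t < 1` for those indices. -/
theorem stmt3 (T : ℕ) (hT : 2 ≤ T) (ρ : ℝ) (hρ1 : 0 ≤ ρ) (hρ2 : ρ < 1)
    (ξ d δ : ℕ → ℝ)
    (hξ : ∀ t, 1 ≤ t → t ≤ T → 0 < ξ t)
    (hdT : d T = 1 + ξ T)
    (hd : ∀ t, 2 ≤ t → t ≤ T - 1 → d t = 1 + ρ ^ 2 + ξ t - ρ ^ 2 / d (t + 1))
    (hd1 : d 1 = 1 + ξ 1 - ρ ^ 2 / d 2)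
    (hδ1 : δ 1 = 1 + ξ 1)
    (hδ : ∀ t, 2 ≤ t → t ≤ T - 1 → δ t = 1 + ρ ^ 2 + ξ t - ρ ^ 2 / δ (t - 1))
    (hδT : δ T = 1 + ξ T - ρ ^ 2 / δ (T - 1)) :
    (∀ t, 2 ≤ t → t ≤ T → ρ < d t) ∧
    (∀ t, 1 ≤ t → t ≤ T - 1 → ρ < δ t) ∧
    (∀ t, 2 ≤ t → t ≤ T → ρ / d t < 1) ∧
    (∀ t, 1 ≤ t → t ≤ T - 1 → ρ / δ t < 1) := by
  obtain ⟨one_lt_d, one_lt_δ⟩ := stmt3_general hξ hdT hd hδ1 hδ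
  exact ⟨fun t h h' ↦ hρ2.trans (one_lt_d t h h'), fun t h h' ↦ hρ2.trans (one_lt_δ t h h'),
    fun t h h' ↦ div_lt_one_of_lt_one_of_one_lt hρ2 (one_lt_d t h h'),
    fun t h h' ↦ div_lt_one_of_lt_one_of_one_lt hρ2 (one_lt_δ t h h')⟩
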